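/- A finite connected simple graph G is a convex geometry with respect to the geodetic convexity if and only if G is Ptolemaic, i.e., G is chordal and contains no induced subgraph isomorphic to the gem. -/

import Mathlib

open SimpleGraph

variable {V : Type*} {W : Type*}

/-- The convex hull of `S`: the smallest convex set containing `S`. -/
def chull (Cvx : Set V → Prop) (S : Set V) : Set V := ⋂₀ {T | S ⊆ T ∧ Cvx T}

/-- The set of extreme vertices of `S`. -/
def extremeSet (Cvx : Set V → Prop) (S : Set V) : Set V := {x | x ∈ S ∧ Cvx (S \ {x})}

/-- A convexity is a convex geometry if every convex set is the convex hull
of its extreme vertices. -/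
def IsConvexGeometry (Cvx : Set V → Prop) : Prop :=
  ∀ S : Set V, Cvx S → S = chull Cvx (extremeSet Cvx S)

/-- Convexity induced by a system of p-walks: `S` is convex iff every vertex
lying on a p-walk between two vertices of `S` belongs to `S`. -/
def PConvex (G : SimpleGraph V) (P : ∀ ⦃u v : V⦄, G.Walk u v → Prop) (S : Set V) : Prop :=
  ∀ ⦃u v : V⦄, u ∈ S → v ∈ S → ∀ w : G.Walk u v, P w → ∀ x ∈ w.support, x ∈ S

/-- `x` and `y` appear consecutively (in either order) in the list `l`. -/
def consecIn (l : List V) (x y : V) : Prop := [x, y] <:+: l ∨ [y, x] <:+: l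

/-- An induced path: a path such that the only edges of `G` between its vertices
are the consecutive ones. -/
def IsInducedPathW (G : SimpleGraph V) {u v : V} (w : G.Walk u v) : Prop :=
  w.IsPath ∧ ∀ x ∈ w.support, ∀ y ∈ w.support, G.Adj x y → consecIn w.support x y

/-- An induced cycle: a cycle such that the only edges of `G` between its vertices
are the consecutive (cyclically) ones. -/
def IsInducedCycleW (G : SimpleGraph V) {u : V} (w : G.Walk u u) : Prop :=
  w.IsCycle ∧ ∀ x ∈ w.support, ∀ y ∈ w.support, G.Adj x y → consecIn w.support x y

/-- A graph is chordal if it has no induced cycle of length at least 4. -/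
def Chordal (G : SimpleGraph V) : Prop :=
  ¬ ∃ (u : V) (w : G.Walk u u), IsInducedCycleW G w ∧ 4 ≤ w.length

/-- The cycle `w` has an odd chord: an edge of `G` joining two vertices of the cycle
whose distance along the cycle is odd and greater than 1. -/
def HasOddChord (G : SimpleGraph V) {u : V} (w : G.Walk u u) : Prop :=
  ∃ i j : ℕ, ∃ hi : i < w.support.length, ∃ hj : j < w.support.length, i < j ∧
    G.Adj (w.support.get ⟨i, hi⟩) (w.support.get ⟨j, hj⟩) ∧
    Odd (min (j - i) (w.length - (j - i))) ∧ 1 < min (j - i) (w.length - (j - i))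

/-- A graph is strongly chordal if it is chordal and every even cycle of length
at least 6 has an odd chord. -/
def StronglyChordal (G : SimpleGraph V) : Prop :=
  Chordal G ∧ ∀ (u : V) (w : G.Walk u u), w.IsCycle → Even w.length → 6 ≤ w.length →
    HasOddChord G w

/-- Closed neighborhood `N[v]`. -/
def closedNbhd (G : SimpleGraph V) (v : V) : Set V := insert v (G.neighborSet v)

/-- A vertex is simple if the closed neighborhoods of its closed neighbors form a
family totally ordered by inclusion. -/
def SimpleVtx (G : SimpleGraph V) (v : V) : Prop :=
  ∀ u ∈ closedNbhd G v, ∀ w ∈ closedNbhd G v,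
    closedNbhd G u ⊆ closedNbhd G w ∨ closedNbhd G w ⊆ closedNbhd G u

/-- A vertex is simplicial if its closed neighborhood is a clique. -/
def SimplicialVtx (G : SimpleGraph V) (v : V) : Prop :=
  G.IsClique (closedNbhd G v)

/-- An even-chorded path: a path with no odd chord and such that no endpoint
lies in a chord. -/
def IsEvenChorded (G : SimpleGraph V) {u v : V} (w : G.Walk u v) : Prop :=
  w.IsPath ∧ ∀ i j : ℕ, ∀ hi : i < w.support.length, ∀ hj : j < w.support.length,
    i + 1 < j → G.Adj (w.support.get ⟨i, hi⟩) (w.support.get ⟨j, hj⟩) →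
      Even (j - i) ∧ 0 < i ∧ j < w.support.length - 1

/-- A tolled walk `u₀u₁…u_k`: `u₀uᵢ ∈ E(G)` implies `i = 1` and `u_ju_k ∈ E(G)`
implies `j = k - 1`. -/
def IsTolledWalk (G : SimpleGraph V) {u v : V} (w : G.Walk u v) : Prop :=
  ∀ i : ℕ, ∀ hi : i < w.support.length,
    (G.Adj u (w.support.get ⟨i, hi⟩) → i = 1) ∧
    (G.Adj (w.support.get ⟨i, hi⟩) v → i = w.support.length - 2)

/-- A weakly toll walk `u₀u₁…u_k`: `u₀uᵢ ∈ E(G)` implies `uᵢ = u₁` and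
`u_ju_k ∈ E(G)` implies `u_j = u_{k-1}`. -/
def IsWeaklyTollWalk (G : SimpleGraph V) {u v : V} (w : G.Walk u v) : Prop :=
  ∀ i : ℕ, ∀ hi : i < w.support.length,
    (G.Adj u (w.support.get ⟨i, hi⟩) → w.support.get ⟨i, hi⟩ = w.support.getD 1 u) ∧
    (G.Adj (w.support.get ⟨i, hi⟩) v → w.support.get ⟨i, hi⟩ = w.support.getD (w.support.length - 2) v)

/-- An interval graph: vertices can be assigned nonempty closed real intervals so that
distinct vertices are adjacent iff the intervals intersect. -/
def IsIntervalGraph (G : SimpleGraph V) : Prop :=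
  ∃ a b : V → ℝ, (∀ v, a v ≤ b v) ∧
    ∀ u v : V, u ≠ v →
      (G.Adj u v ↔ (Set.Icc (a u) (b u) ∩ Set.Icc (a v) (b v)).Nonempty)

/-- A proper interval graph: an interval model in which no interval properly
contains another. -/
def IsProperIntervalGraph (G : SimpleGraph V) : Prop :=
  ∃ a b : V → ℝ, (∀ v, a v ≤ b v) ∧
    (∀ u v : V, u ≠ v →
      (G.Adj u v ↔ (Set.Icc (a u) (b u) ∩ Set.Icc (a v) (b v)).Nonempty)) ∧
    ∀ u v : V, ¬ (Set.Icc (a u) (b u) ⊂ Set.Icc (a v) (b v))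

/-- An end vertex: some interval model in which its interval is an end interval. -/
def IsEndVertex (G : SimpleGraph V) (x : V) : Prop :=
  ∃ a b : V → ℝ, (∀ v, a v ≤ b v) ∧
    (∀ u v : V, u ≠ v →
      (G.Adj u v ↔ (Set.Icc (a u) (b u) ∩ Set.Icc (a v) (b v)).Nonempty)) ∧
    ((∀ v, a x ≤ a v) ∨ (∀ v, b v ≤ b x))

/-- `G` contains an induced subgraph isomorphic to `H`. -/
def HasInducedSubgraphIso (G : SimpleGraph V) (H : SimpleGraph W) : Prop :=
  ∃ f : W ↪ V, ∀ a b : W, G.Adj (f a) (f b) ↔ H.Adj a b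

def gemGraph : SimpleGraph (Fin 5) :=
  SimpleGraph.fromRel fun a b =>
    ((a : ℕ), (b : ℕ)) ∈ [(0,1),(1,2),(2,3),(4,0),(4,1),(4,2),(4,3)]

def houseGraph : SimpleGraph (Fin 5) :=
  SimpleGraph.fromRel fun a b =>
    ((a : ℕ), (b : ℕ)) ∈ [(0,1),(1,2),(2,3),(0,3),(0,4),(1,4)]

def dominoGraph : SimpleGraph (Fin 6) :=
  SimpleGraph.fromRel fun a b =>
    ((a : ℕ), (b : ℕ)) ∈ [(0,1),(1,2),(2,3),(0,3),(2,4),(4,5),(3,5)]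

def aGraph : SimpleGraph (Fin 6) :=
  SimpleGraph.fromRel fun a b =>
    ((a : ℕ), (b : ℕ)) ∈ [(0,1),(1,2),(2,3),(0,3),(2,4),(3,5)]

/-- A triangle path: a path such that any two of its vertices at distance
greater than 2 along the path are non-adjacent in `G`. -/
def IsTrianglePath (G : SimpleGraph V) {u v : V} (w : G.Walk u v) : Prop :=
  w.IsPath ∧ ∀ i j : ℕ, ∀ hi : i < w.support.length, ∀ hj : j < w.support.length,
    i + 2 < j → ¬ G.Adj (w.support.get ⟨i, hi⟩) (w.support.get ⟨j, hj⟩)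

/-- `S` is `H`-free convex. -/
def HFreeConvex [Fintype W] (G : SimpleGraph V) (H : SimpleGraph W) (S : Set V) : Prop :=
  ∀ (S' : Finset V), ↑S' ⊆ S → S'.card = Fintype.card W - 1 →
    ∀ x : V, Nonempty ((G.induce (↑S' ∪ {x} : Set V)) ≃g H) → x ∈ S

/-- `a b c d` is an induced path on four vertices of `G`. -/
def InducedP4 (G : SimpleGraph V) (a b c d : V) : Prop :=
  G.Adj a b ∧ G.Adj b c ∧ G.Adj c d ∧ ¬ G.Adj a c ∧ ¬ G.Adj a d ∧ ¬ G.Adj b d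

/-- Every connected component of `G` is a star. -/
def StarForest (G : SimpleGraph V) : Prop :=
  ∀ v : V, ∃ c : V, G.Reachable v c ∧ (∀ x, G.Reachable c x → x ≠ c → G.Adj c x) ∧
    ∀ x y, G.Adj c x → G.Adj c y → ¬ G.Adj x y

/-- An induced `n`-gem in `G`: `x 0, …, x n` is an induced path and `u` is adjacent
to all of them, the whole forming an induced subgraph of `G`. -/
def IsInducedNGem (G : SimpleGraph V) (n : ℕ) (x : Fin (n + 1) → V) (u : V) : Prop :=
  Function.Injective x ∧ (∀ i, x i ≠ u) ∧
  (∀ i j, G.Adj (x i) (x j) ↔ ((i : ℕ) + 1 = (j : ℕ) ∨ (j : ℕ) + 1 = (i : ℕ))) ∧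
  (∀ i, G.Adj u (x i))

/-- The induced `n`-gem is solved: there is an induced path of length 3 in `G`
connecting `x 0` and `x n` that avoids `u`. -/
def GemSolved (G : SimpleGraph V) (n : ℕ) (x : Fin (n + 1) → V) (u : V) : Prop :=
  ∃ w : G.Walk (x 0) (x (Fin.last n)), IsInducedPathW G w ∧ w.length = 3 ∧ u ∉ w.support

/-!
In the geodetic convexity every extreme vertex of a convex set is simplicial in it. So in a convex
geometry every set `C` lies in the hull of the vertices simplicial in the subgraph induced by `C`.
A long induced cycle has no simplicial vertex. In a gem on the path `abcd`, only `a` and `d` are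
simplicial in `{a, b, c, d}`, but they are at distance two, so by chordality `{a, d} ∪ (N(a) ∩
N(d))` is convex, and it misses `b`.

Conversely, it suffices to add a vertex to a convex set `K` properly contained in a convex set `S`,
staying convex and inside `S`: in a maximal convex `K` that contains the extreme vertices of `S`,
the vertex added would itself be extreme. Choose `y ∈ S \ K` whose neighbourhood in `K` is maximal.
If `y` cannot be added, some neighbour `p ∈ S \ K` of `y` is closer than `y` to a vertex of `K`. As
induced paths on four vertices of a Ptolemaic graph are geodesics, `p` is then adjacent to all
neighbours of `y` in `K` and to at least one more vertex of `K`, against the choice of `y`.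
-/

section Convexity

variable {Cvx : Set V → Prop} {S T : Set V}

theorem subset_chull : S ⊆ chull Cvx S :=
  Set.subset_sInter fun _ hT => hT.1

theorem chull_subset (hST : S ⊆ T) (hT : Cvx T) : chull Cvx S ⊆ T :=
  Set.sInter_subset_of_mem ⟨hST, hT⟩

theorem extremeSet_chull_subset : extremeSet Cvx (chull Cvx S) ⊆ S := by
  rintro x ⟨hx, hcvx⟩
  by_contra hxS
  have hsub : chull Cvx S ⊆ chull Cvx S \ {x} :=
    chull_subset (Set.subset_sdiff_singleton subset_chull hxS) hcvx
  exact (hsub hx).2 rfl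

theorem isConvexGeometry_of_exists_insert [Finite V]
    (hInter : ∀ 𝒯 : Set (Set V), (∀ T ∈ 𝒯, Cvx T) → Cvx (⋂₀ 𝒯))
    (hinsert : ∀ ⦃K S : Set V⦄, Cvx K → Cvx S → K ⊂ S → ∃ y ∈ S \ K, Cvx (insert y K)) :
    IsConvexGeometry Cvx := by
  intro S hS
  have hull_subset : chull Cvx (extremeSet Cvx S) ⊆ S := chull_subset (fun x hx => hx.1) hS
  have hull_cvx : Cvx (chull Cvx (extremeSet Cvx S)) := hInter _ fun T hT => hT.2
  by_contra hne
  obtain ⟨K, hullK, ⟨hK, hKS⟩, hmax⟩ :=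
    (Set.toFinite {K | Cvx K ∧ K ⊂ S}).exists_le_maximal
      (show chull Cvx (extremeSet Cvx S) ∈ {K | Cvx K ∧ K ⊂ S} from
        ⟨hull_cvx, hull_subset.ssubset_of_ne (Ne.symm hne)⟩)
  obtain ⟨y, ⟨hyS, hyK⟩, hy⟩ := hinsert hK hS hKS
  have insert_eq : insert y K = S := by
    by_contra hins
    have hss : insert y K ⊂ S := (Set.insert_subset hyS hKS.subset).ssubset_of_ne hins
    exact hyK (hmax ⟨hy, hss⟩ (Set.subset_insert y K) (Set.mem_insert y K))
  have y_extreme : y ∈ extremeSet Cvx S :=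
    ⟨hyS, by rwa [← insert_eq, Set.insert_sdiff_self_of_notMem hyK]⟩
  exact hyK (hullK (subset_chull y_extreme))

end Convexity

theorem pConvex_sInter {G : SimpleGraph V} {P : ∀ ⦃u v : V⦄, G.Walk u v → Prop}
    {𝒯 : Set (Set V)} (h𝒯 : ∀ T ∈ 𝒯, PConvex G P T) : PConvex G P (⋂₀ 𝒯) :=
  fun _ _ hu hv w hw x hx T hT => h𝒯 T hT (hu T hT) (hv T hT) w hw x hx

/-- Geodetic convexity: the p-walks are the shortest paths. -/
def GeodConvex (G : SimpleGraph V) : Set V → Prop :=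
  PConvex G fun u v w => w.IsPath ∧ w.length = G.dist u v

/-- The Ptolemaic graphs, in their description as the gem-free chordal graphs. -/
def Ptolemaic (G : SimpleGraph V) : Prop :=
  Chordal G ∧ ¬ HasInducedSubgraphIso G gemGraph

/-- The vertices of `C` that are simplicial in the subgraph induced by `C`. -/
def simplicialSet (G : SimpleGraph V) (C : Set V) : Set V :=
  {x ∈ C | G.IsClique (G.neighborSet x ∩ C)}

section Distance

variable {G : SimpleGraph V} {a b c k : V}

theorem exists_adj_dist_add_one (h : G.dist a k ≠ 0) :
    ∃ p, G.Adj a p ∧ G.dist p k + 1 = G.dist a k := by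
  obtain ⟨w, hw⟩ := exists_walk_of_dist_ne_zero h
  cases w with
  | nil => exact absurd hw.symm h
  | @cons _ p _ hap w =>
    refine ⟨p, hap, ?_⟩
    have hle := dist_le w
    have hdiff := hap.symm.diff_dist_adj (u := k)
    rw [dist_comm (u := k), dist_comm (u := k)] at hdiff
    rw [Walk.length_cons] at hw
    omega

theorem dist_le_dist_add_one (hab : G.Adj a b) (k : V) : G.dist a k ≤ G.dist b k + 1 := by
  have h := hab.diff_dist_adj (u := k)
  rw [dist_comm (u := k), dist_comm (u := k)] at h
  omega

theorem dist_eq_two_of_adj_adj (hab : G.Adj a b) (hbc : G.Adj b c) (hne : a ≠ c)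
    (hac : ¬ G.Adj a c) : G.dist a c = 2 :=
  le_antisymm (dist_le (.cons hab (.cons hbc .nil)))
    ((hab.reachable.trans hbc.reachable).one_lt_dist_of_ne_of_not_adj hne hac)

end Distance

section GeodConvex

variable {G : SimpleGraph V} {S K : Set V}

/-- Shortest paths can be traversed one vertex at a time, always decreasing the distance to the far
end, so closure under single steps suffices. -/
theorem geodConvex_iff_forall_adj :
    GeodConvex G S ↔
      ∀ a ∈ S, ∀ k ∈ S, ∀ c, G.Adj a c → G.dist c k < G.dist a k → c ∈ S := by
  constructor
  · intro hS a ha k hk c hac hlt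
    have hac_reach : G.Reachable c k :=
      hac.symm.reachable.trans (Reachable.of_dist_ne_zero (by omega))
    obtain ⟨w, hw⟩ := hac_reach.exists_walk_length_eq_dist
    have hlen : (Walk.cons hac w).length = G.dist a k :=
      le_antisymm (by rw [Walk.length_cons]; omega) (dist_le _)
    exact hS ha hk _ ⟨Walk.isPath_of_length_eq_dist _ hlen, hlen⟩ c (by simp)
  · rintro hstep u v hu hv w ⟨-, hw⟩
    induction w with
    | nil => simpa using hu
    | @cons u c v huc w ih =>
      have hlen : w.length = G.dist c v := by
        have hle := dist_le w
        have hle_add := dist_le_dist_add_one huc v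
        rw [Walk.length_cons] at hw
        omega
      have hc : c ∈ S := hstep u hu v hv c huc (by rw [← hw, ← hlen]; simp)
      intro x hx
      rw [Walk.support_cons, List.mem_cons] at hx
      obtain rfl | hx := hx
      · exact hu
      · exact ih hc hv hlen x hx

theorem GeodConvex.mem_of_adj (hS : GeodConvex G S) {a k c : V} (ha : a ∈ S) (hk : k ∈ S)
    (hac : G.Adj a c) (hlt : G.dist c k < G.dist a k) : c ∈ S :=
  geodConvex_iff_forall_adj.1 hS a ha k hk c hac hlt

theorem geodConvex_chull : GeodConvex G (chull (GeodConvex G) S) :=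
  pConvex_sInter fun _ hT => hT.2

theorem isClique_of_mem_extremeSet {x : V} (hx : x ∈ extremeSet (GeodConvex G) S) :
    G.IsClique (G.neighborSet x ∩ S) := by
  rintro p ⟨hxp, hp⟩ q ⟨hxq, hq⟩ hpq
  by_contra hnadj
  have hlt : G.dist x q < G.dist p q := by
    rw [dist_eq_one_iff_adj.2 hxq]
    exact (hxp.symm.reachable.trans hxq.reachable).one_lt_dist_of_ne_of_not_adj hpq hnadj
  exact (hx.2.mem_of_adj ⟨hp, hxp.ne'⟩ ⟨hq, hxq.ne'⟩ hxp.symm hlt).2 rfl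

theorem subset_chull_simplicialSet (hG : IsConvexGeometry (GeodConvex G)) (C : Set V) :
    C ⊆ chull (GeodConvex G) (simplicialSet G C) := by
  have hext : extremeSet (GeodConvex G) (chull (GeodConvex G) C) ⊆ simplicialSet G C :=
    fun x hx => ⟨extremeSet_chull_subset hx,
      (isClique_of_mem_extremeSet hx).subset (Set.inter_subset_inter_right _ subset_chull)⟩
  calc C ⊆ chull (GeodConvex G) C := subset_chull
    _ = chull (GeodConvex G) (extremeSet (GeodConvex G) (chull (GeodConvex G) C)) :=
      hG _ geodConvex_chull
    _ ⊆ chull (GeodConvex G) (simplicialSet G C) :=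
      chull_subset (hext.trans subset_chull) geodConvex_chull

end GeodConvex

section InducedPathsAndCycles

variable {G : SimpleGraph V} {u v p q y : V}

theorem isInducedCycleW_iff_isChordless {w : G.Walk u u} :
    IsInducedCycleW G w ↔ w.IsCycle ∧ w.IsChordless := by
  simp only [IsInducedCycleW, Walk.isChordless_iff_forall_mem_edges, consecIn,
    Walk.infix_support_iff_mem_edges]
  grind

theorem exists_shorter_walk_of_isChord {w : G.Walk u v} {e : Sym2 V} (he : w.IsChord e) :
    ∃ w' : G.Walk u v, w'.support ⊆ w.support ∧ w'.length < w.length := by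
  have shortcut {i j : ℕ} (hij : i < j) (hj : j ≤ w.length)
      (hadj : G.Adj (w.getVert i) (w.getVert j))
      (hne : s(w.getVert i, w.getVert j) ∉ w.edges) :
      ∃ w' : G.Walk u v, w'.support ⊆ w.support ∧ w'.length < w.length := by
    have hj' : j ≠ i + 1 := by
      rintro rfl
      exact hne ((w.mk_mem_edges_iff_exists).2 ⟨i, by omega, rfl⟩)
    refine ⟨(w.take i).append (.cons hadj (w.drop j)), fun x hx => ?_, ?_⟩
    · rw [Walk.mem_support_append_iff, Walk.support_cons, List.mem_cons] at hx
      obtain hx | rfl | hx := hx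
      · exact (w.isSubwalk_take i).support_subset hx
      · exact w.getVert_mem_support i
      · exact (w.isSubwalk_drop j).support_subset hx
    · rw [Walk.length_append, Walk.length_cons, Walk.take_length, Walk.drop_length]
      omega
  induction e with
  | _ x z =>
    obtain ⟨hadj, hne, hx, hz⟩ := Walk.isChord_sym2Mk.1 he
    obtain ⟨i, rfl, hi⟩ := Walk.mem_support_iff_exists_getVert.1 hx
    obtain ⟨j, rfl, hj⟩ := Walk.mem_support_iff_exists_getVert.1 hz
    obtain hij | rfl | hji := lt_trichotomy i j
    · exact shortcut hij hj hadj hne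
    · exact absurd rfl hadj.ne
    · exact shortcut hji hi hadj.symm (by rwa [Sym2.eq_swap])

theorem exists_isPath_isChordless (w : G.Walk u v) :
    ∃ b : G.Walk u v, b.IsPath ∧ b.IsChordless ∧ b.support ⊆ w.support := by
  classical
  obtain ⟨b, hbw, hmin⟩ := exists_minimalFor_of_wellFoundedLT
    (fun b : G.Walk u v => b.support ⊆ w.support) Walk.length ⟨w, List.Subset.refl _⟩
  have length_le {b' : G.Walk u v} (hb' : b'.support ⊆ b.support) : b.length ≤ b'.length :=
    (le_total b.length b'.length).elim id fun h => hmin (fun _ hx => hbw (hb' hx)) h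
  refine ⟨b, ?_, fun e he => ?_, hbw⟩
  · rw [← b.bypass_eq_self_of_length_le_length_bypass
      (length_le b.support_bypass_subset_support)]
    exact b.bypass_isPath
  · obtain ⟨b', hb', hlt⟩ := exists_shorter_walk_of_isChord he
    exact hlt.not_ge (length_le hb')

theorem isInducedCycleW_cons_concat {b : G.Walk p q} (hb : b.IsPath) (hchord : b.IsChordless)
    (hpq : p ≠ q) (hp : G.Adj y p) (hq : G.Adj q y)
    (hsupp : ∀ x ∈ b.support, x ∈ closedNbhd G y → x = p ∨ x = q) :
    IsInducedCycleW G (.cons hp (b.concat hq)) := by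
  have hy : y ∉ b.support := fun h =>
    (hsupp y h (Set.mem_insert y _)).elim (fun h => hp.ne h) fun h => hq.ne h.symm
  rw [isInducedCycleW_iff_isChordless, Walk.cons_isCycle_iff,
    Walk.isChordless_iff_forall_mem_edges]
  refine ⟨⟨hb.concat hy hq, fun h => ?_⟩, ?_⟩
  · rw [Walk.edges_concat, List.concat_eq_append, List.mem_append, List.mem_singleton] at h
    obtain h | h := h
    · exact hy (b.fst_mem_support_of_mem_edges h)
    · grind
  · have mem_support_iff {z : V} :
        z ∈ (Walk.cons hp (b.concat hq)).support ↔ z = y ∨ z ∈ b.support := by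
      simp only [Walk.support_cons, Walk.support_concat, List.mem_cons, List.mem_append,
        List.not_mem_nil, or_false]
      tauto
    have chord_from_y {x : V} (hx : x ∈ b.support) (hyx : G.Adj y x) :
        s(y, x) ∈ (Walk.cons hp (b.concat hq)).edges := by
      obtain rfl | rfl := hsupp x hx (Set.mem_insert_of_mem y hyx)
      · simp
      · simp [Walk.edges_concat, Sym2.eq_swap]
    have old_chord {x z : V} (hx : x ∈ b.support) (hz : z ∈ b.support) (hxz : G.Adj x z) :
        s(x, z) ∈ (Walk.cons hp (b.concat hq)).edges := by
      simp [Walk.edges_concat, hchord.mem_edges hx hz hxz]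
    intro x z hx hz hxz
    rw [mem_support_iff] at hx hz
    obtain rfl | hx := hx <;> obtain rfl | hz := hz
    · exact absurd rfl hxz.ne
    · exact chord_from_y hz hxz
    · rw [Sym2.eq_swap]
      exact chord_from_y hx hxz.symm
    · exact old_chord hx hz hxz

theorem Chordal.adj_of_walk (hG : Chordal G) (hp : G.Adj y p) (hq : G.Adj y q) (hpq : p ≠ q)
    (w : G.Walk p q) (hw : ∀ x ∈ w.support, x ∈ closedNbhd G y → x = p ∨ x = q) :
    G.Adj p q := by
  obtain ⟨b, hb, hchord, hbw⟩ := exists_isPath_isChordless w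
  have hcycle := isInducedCycleW_cons_concat hb hchord hpq hp hq.symm fun x hx => hw x (hbw hx)
  by_contra hnadj
  have hlen : 2 ≤ b.length := by
    by_contra! hlt
    have hne_one : b.length ≠ 1 := fun h => hnadj (Walk.exists_length_eq_one_iff.1 ⟨b, h⟩)
    exact hpq (Walk.eq_of_length_eq_zero (p := b) (by omega))
  exact hG ⟨y, _, hcycle, by rw [Walk.length_cons, Walk.length_concat]; omega⟩

theorem IsInducedCycleW.not_adj_snd_penultimate {w : G.Walk u u} (hw : IsInducedCycleW G w)
    (hlen : 4 ≤ w.length) : ¬ G.Adj w.snd w.penultimate := by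
  obtain ⟨hcycle, hchord⟩ := isInducedCycleW_iff_isChordless.1 hw
  intro hadj
  obtain ⟨i, hi, heq⟩ : ∃ i < w.length,
      s(w.getVert i, w.getVert (i + 1)) = s(w.getVert 1, w.getVert (w.length - 1)) :=
    w.mk_mem_edges_iff_exists.1
      (hchord.mem_edges (w.getVert_mem_support _) (w.getVert_mem_support _) hadj)
  have inj {m n : ℕ} (hm : 1 ≤ m ∧ m ≤ w.length) (hn : 1 ≤ n ∧ n ≤ w.length)
      (h : w.getVert m = w.getVert n) : m = n := hcycle.getVert_injOn hm hn h
  have getVert_zero : w.getVert 0 = w.getVert w.length := by simp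
  grind

theorem IsInducedCycleW.rotate [DecidableEq V] {w : G.Walk u u} (hw : IsInducedCycleW G w)
    (hv : v ∈ w.support) : IsInducedCycleW G (w.rotate v hv) := by
  rw [isInducedCycleW_iff_isChordless, Walk.isChordless_iff_forall_mem_edges] at hw ⊢
  refine ⟨hw.1.rotate hv, fun x z hx hz hxz => ?_⟩
  rw [(w.rotate_edges v hv).mem_iff]
  rw [Walk.mem_support_rotate_iff] at hx hz
  exact hw.2 hx hz hxz

theorem IsInducedCycleW.simplicialSet_eq_empty {w : G.Walk u u} (hw : IsInducedCycleW G w)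
    (hlen : 4 ≤ w.length) : simplicialSet G {x | x ∈ w.support} = ∅ := by
  classical
  refine Set.eq_empty_of_forall_notMem ?_
  rintro x ⟨hx : x ∈ w.support, hclique⟩
  have hrot := hw.rotate hx
  have hnil : ¬ (w.rotate x hx).Nil := hrot.1.not_nil
  have getVert_mem (i : ℕ) : (w.rotate x hx).getVert i ∈ {x | x ∈ w.support} :=
    (w.mem_support_rotate_iff x hx).1 (Walk.getVert_mem_support _ i)
  refine hrot.not_adj_snd_penultimate (by rwa [Walk.length_rotate]) ?_
  exact hclique ⟨Walk.adj_snd hnil, getVert_mem _⟩ ⟨(Walk.adj_penultimate hnil).symm, getVert_mem _⟩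
    hrot.1.snd_ne_penultimate

end InducedPathsAndCycles

section Chordal

variable {G : SimpleGraph V} {a b k p q y : V}

theorem eq_of_mem_support_of_mem_closedNbhd {w : G.Walk p k} (hw : w.length < G.dist y k)
    {x : V} (hx : x ∈ w.support) (hyx : x ∈ closedNbhd G y) : x = p := by
  classical
  have hlen : (w.takeUntil x hx).length + (w.dropUntil x hx).length = w.length := by
    rw [← Walk.length_append, Walk.take_spec]
  have hdrop := dist_le (w.dropUntil x hx)
  obtain rfl | hyx := hyx
  · omega
  · have hdist := dist_le_dist_add_one hyx k
    exact (Walk.eq_of_length_eq_zero (p := w.takeUntil x hx) (by omega)).symm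

theorem exists_walk_length_lt_dist (hyp : G.Adj y p) (hp : G.dist p k < G.dist y k) :
    ∃ w : G.Walk p k, w.length < G.dist y k := by
  obtain ⟨w, hw⟩ := (hyp.symm.reachable.trans
    (Reachable.of_dist_ne_zero (by omega : G.dist y k ≠ 0))).exists_walk_length_eq_dist
  exact ⟨w, hw ▸ hp⟩

theorem Chordal.adj_of_dist_lt (hG : Chordal G) (hyp : G.Adj y p) (hyq : G.Adj y q) (hpq : p ≠ q)
    (hp : G.dist p k < G.dist y k) (hq : G.dist q k < G.dist y k) : G.Adj p q := by
  obtain ⟨wp, hwp⟩ := exists_walk_length_lt_dist hyp hp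
  obtain ⟨wq, hwq⟩ := exists_walk_length_lt_dist hyq hq
  refine hG.adj_of_walk hyp hyq hpq (wp.append wq.reverse) fun x hx hyx => ?_
  rw [Walk.mem_support_append_iff, Walk.support_reverse, List.mem_reverse] at hx
  exact hx.imp (eq_of_mem_support_of_mem_closedNbhd hwp · hyx)
    (eq_of_mem_support_of_mem_closedNbhd hwq · hyx)

/-- This is the triangle condition for weakly modular graphs. -/
theorem Chordal.exists_common_adj_dist_add_one (hG : Chordal G) (hab : G.Adj a b)
    (hdist : G.dist a k = G.dist b k) (hne : G.dist a k ≠ 0) :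
    ∃ c, G.Adj a c ∧ G.Adj b c ∧ G.dist c k + 1 = G.dist a k := by
  obtain ⟨p, hap, hp⟩ := exists_adj_dist_add_one hne
  obtain ⟨q, hbq, hq⟩ := exists_adj_dist_add_one (hdist ▸ hne)
  by_cases haq : G.Adj a q
  · exact ⟨q, haq, hbq, by omega⟩
  refine ⟨p, hap, ?_, hp⟩
  obtain ⟨wp, hwp⟩ := exists_walk_length_lt_dist hap (by omega : G.dist p k < G.dist a k)
  obtain ⟨wq, hwq⟩ := exists_walk_length_lt_dist hbq (by omega : G.dist q k < G.dist b k)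
  rw [← hdist] at hwq
  have hpb : p ≠ b := by
    rintro rfl
    omega
  refine (hG.adj_of_walk hap hab hpb ((wp.append wq.reverse).concat hbq.symm) ?_).symm
  intro x hx hax
  simp only [Walk.support_concat, Walk.mem_support_append_iff, Walk.support_reverse,
    List.mem_append, List.mem_reverse, List.mem_singleton] at hx
  obtain (hx | hx) | rfl := hx
  · exact Or.inl (eq_of_mem_support_of_mem_closedNbhd hwp hx hax)
  · obtain rfl := eq_of_mem_support_of_mem_closedNbhd hwq hx hax
    obtain rfl | haq' := hax
    · omega
    · exact absurd haq' haq
  · exact Or.inr rfl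

end Chordal

section Gem

variable {G : SimpleGraph V} {a b c d : V}

theorem hasInducedSubgraphIso_gemGraph_iff :
    HasInducedSubgraphIso G gemGraph ↔
      ∃ a b c d e, InducedP4 G a b c d ∧ G.Adj e a ∧ G.Adj e b ∧ G.Adj e c ∧ G.Adj e d := by
  constructor
  · rintro ⟨f, hf⟩
    exact ⟨f 0, f 1, f 2, f 3, f 4, by simp [InducedP4, hf, gemGraph]⟩
  · rintro ⟨a, b, c, d, e, ⟨hab, hbc, hcd, hac, had, hbd⟩, hea, heb, hec, hed⟩
    have hinj : Function.Injective ![a, b, c, d, e] := by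
      intro i j hij
      fin_cases i <;> fin_cases j <;> simp at hij ⊢ <;> grind [SimpleGraph.Adj.symm]
    refine ⟨⟨_, hinj⟩, fun i j => ?_⟩
    fin_cases i <;> fin_cases j <;> simp [gemGraph] <;> grind [SimpleGraph.Adj.symm]

theorem InducedP4.symm (h : InducedP4 G a b c d) : InducedP4 G d c b a := by
  obtain ⟨hab, hbc, hcd, hac, had, hbd⟩ := h
  exact ⟨hcd.symm, hbc.symm, hab.symm, mt .symm hbd, mt .symm had, mt .symm hac⟩

theorem InducedP4.first_ne_third (h : InducedP4 G a b c d) : a ≠ c := by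
  rintro rfl
  exact h.2.2.2.2.1 h.2.2.1

theorem InducedP4.first_ne_fourth (h : InducedP4 G a b c d) : a ≠ d := by
  rintro rfl
  exact h.2.2.2.2.2 h.1.symm

theorem InducedP4.simplicialSet_subset (h : InducedP4 G a b c d) :
    simplicialSet G {a, b, c, d} ⊆ {a, d} := by
  have hne := h.first_ne_third
  have hne' := h.symm.first_ne_third
  obtain ⟨hab, hbc, hcd, hac, had, hbd⟩ := h
  rintro x ⟨rfl | rfl | rfl | rfl, hclique⟩
  · exact Or.inl rfl
  · exact absurd (hclique ⟨hab.symm, by simp⟩ ⟨hbc, by simp⟩ hne) hac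
  · exact absurd (hclique ⟨hbc.symm, by simp⟩ ⟨hcd, by simp⟩ hne'.symm) hbd
  · exact Or.inr rfl

theorem Ptolemaic.dist_eq_three_of_inducedP4 (hG : Ptolemaic G) (h : InducedP4 G a b c d) :
    G.dist a d = 3 := by
  have hne := h.first_ne_fourth
  have hne' := h.symm.first_ne_third.symm
  obtain ⟨hab, hbc, hcd, hac, had, hbd⟩ := id h
  have hbd2 : G.dist b d = 2 := dist_eq_two_of_adj_adj hbc hcd hne' hbd
  have hle := dist_le_dist_add_one hab d
  have hlt := (hab.reachable.trans
    (hbc.reachable.trans hcd.reachable)).one_lt_dist_of_ne_of_not_adj hne had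
  by_contra hne3
  have had2 : G.dist a d = 2 := by omega
  obtain ⟨e, hae, hbe, hed⟩ :=
    hG.1.exists_common_adj_dist_add_one hab (had2.trans hbd2.symm) (by omega)
  have hed : G.Adj e d := dist_eq_one_iff_adj.1 (by omega)
  have hec : G.Adj e c := by
    refine hG.1.adj_of_dist_lt (k := d) hbe hbc ?_ ?_ ?_
    · rintro rfl
      exact hac hae
    · rw [dist_eq_one_iff_adj.2 hed, hbd2]
      omega
    · rw [dist_eq_one_iff_adj.2 hcd, hbd2]
      omega
  exact hG.2 (hasInducedSubgraphIso_gemGraph_iff.2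
    ⟨a, b, c, d, e, h, hae.symm, hbe.symm, hec, hed⟩)

end Gem

section Necessity

variable {G : SimpleGraph V} {a d : V}

theorem chordal_of_isConvexGeometry (hG : IsConvexGeometry (GeodConvex G)) : Chordal G := by
  rintro ⟨u, w, hw, hlen⟩
  have hempty : GeodConvex G ∅ := fun _ _ hu => hu.elim
  have hu : u ∈ chull (GeodConvex G) (simplicialSet G {x | x ∈ w.support}) :=
    subset_chull_simplicialSet hG _ w.start_mem_support
  rw [hw.simplicialSet_eq_empty hlen] at hu
  exact chull_subset (Set.Subset.refl ∅) hempty hu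

theorem Chordal.isClique_commonNeighbors (hG : Chordal G) (had : G.dist a d = 2) :
    G.IsClique (G.commonNeighbors a d) := by
  rintro x ⟨hax, hdx⟩ y ⟨hay, hdy⟩ hxy
  refine hG.adj_of_dist_lt (k := d) hax hay hxy ?_ ?_
  · rw [dist_eq_one_iff_adj.2 hdx.symm, had]
    omega
  · rw [dist_eq_one_iff_adj.2 hdy.symm, had]
    omega

theorem Chordal.geodConvex_pair_union_commonNeighbors (hG : Chordal G) (had : G.dist a d = 2) :
    GeodConvex G ({a, d} ∪ G.commonNeighbors a d) := by
  have hclique := hG.isClique_commonNeighbors had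
  have dist_le_one {x z : V} (hx : x ∈ {a, d} ∪ G.commonNeighbors a d)
      (hz : z ∈ G.commonNeighbors a d) : G.dist x z ≤ 1 := by
    obtain (rfl | rfl) | hx := hx
    · exact (dist_eq_one_iff_adj.2 hz.1).le
    · exact (dist_eq_one_iff_adj.2 hz.2).le
    · by_cases hxz : x = z
      · simp [hxz]
      · exact (dist_eq_one_iff_adj.2 (hclique hx hz hxz)).le
  rw [geodConvex_iff_forall_adj]
  intro x hx k hk c hxc hlt
  have hck : G.Reachable c k := hxc.symm.reachable.trans (.of_dist_ne_zero (by omega))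
  obtain hle | hgt := le_or_gt (G.dist x k) 1
  · rwa [hck.dist_eq_zero_iff.1 (by omega)]
  · have adj_of_dist (h : G.dist x k = 2) : G.Adj k c := by
      have := dist_le_dist_add_one hxc k
      rw [← dist_eq_one_iff_adj, dist_comm]
      omega
    obtain (rfl | rfl) | hx' := hx <;> obtain (rfl | rfl) | hk' := hk
    · simp at hgt
    · exact Or.inr ⟨hxc, adj_of_dist had⟩
    · exact absurd (dist_le_one (by simp) hk') hgt.not_ge
    · exact Or.inr ⟨adj_of_dist (dist_comm.trans had), hxc⟩
    · simp at hgt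
    · exact absurd (dist_le_one (by simp) hk') hgt.not_ge
    all_goals
      rw [dist_comm] at hgt
      exact absurd (dist_le_one (by grind) hx') hgt.not_ge

theorem not_hasInducedSubgraphIso_gemGraph_of_isConvexGeometry
    (hG : IsConvexGeometry (GeodConvex G)) : ¬ HasInducedSubgraphIso G gemGraph := by
  rw [hasInducedSubgraphIso_gemGraph_iff]
  rintro ⟨a, b, c, d, e, h, hea, -, -, hed⟩
  have had : G.dist a d = 2 :=
    dist_eq_two_of_adj_adj hea.symm hed h.first_ne_fourth h.2.2.2.2.1
  have hb : b ∈ {a, d} ∪ G.commonNeighbors a d :=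
    chull_subset (h.simplicialSet_subset.trans Set.subset_union_left)
      ((chordal_of_isConvexGeometry hG).geodConvex_pair_union_commonNeighbors had)
      (subset_chull_simplicialSet hG {a, b, c, d} (by simp))
  obtain (rfl | rfl) | hb := hb
  · exact h.1.ne rfl
  · exact h.symm.first_ne_third rfl
  · exact h.2.2.2.2.2 hb.2.symm

theorem ptolemaic_of_isConvexGeometry (hG : IsConvexGeometry (GeodConvex G)) : Ptolemaic G :=
  ⟨chordal_of_isConvexGeometry hG, not_hasInducedSubgraphIso_gemGraph_of_isConvexGeometry hG⟩

end Necessity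

section Sufficiency

variable {G : SimpleGraph V} {K S : Set V} {a b k p r y : V}

theorem Ptolemaic.adj_of_dist_eq (hG : Ptolemaic G) (hab : G.Adj a b)
    (hdist : G.dist a k = G.dist b k) (hap : G.Adj a p) (hp : G.dist p k < G.dist a k)
    (hpk : G.dist p k ≠ 0) : G.Adj b p := by
  by_contra hbp
  obtain ⟨c, hac, hbc, hc⟩ := hG.1.exists_common_adj_dist_add_one hab hdist (by omega)
  have hpc : G.Adj p c := by
    refine hG.1.adj_of_dist_lt hap hac ?_ hp (by omega)
    rintro rfl
    exact hbp hbc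
  have hp' := dist_le_dist_add_one hap k
  obtain ⟨r, hpr, hcr, hr⟩ := hG.1.exists_common_adj_dist_add_one hpc (by omega) hpk
  have not_adj_r {x : V} (hx : G.dist x k = G.dist a k) : ¬ G.Adj x r := fun hxr => by
    have := dist_le_dist_add_one hxr k
    omega
  have hpath : InducedP4 G b a p r :=
    ⟨hab.symm, hap, hpr, hbp, not_adj_r hdist.symm, not_adj_r rfl⟩
  have hbr := dist_le (.cons hbc (.cons hcr .nil))
  rw [hG.dist_eq_three_of_inducedP4 hpath] at hbr
  simp at hbr

theorem GeodConvex.exists_adj_dist_lt (hK : GeodConvex G K) (hG : Chordal G) (hy : y ∉ K)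
    (ha : a ∈ K) (hya : G.Adj y a) (hk : k ∈ K) (hyk : G.dist y k ≠ 0) :
    ∃ b ∈ K, G.Adj y b ∧ G.dist b k < G.dist y k := by
  obtain hlt | heq | hgt := lt_trichotomy (G.dist a k) (G.dist y k)
  · exact ⟨a, ha, hya, hlt⟩
  · obtain ⟨b, hyb, hab, hb⟩ := hG.exists_common_adj_dist_add_one hya heq.symm hyk
    exact ⟨b, hK.mem_of_adj ha hk hab (by omega), hyb, by omega⟩
  · exact absurd (hK.mem_of_adj ha hk hya.symm hgt) hy

theorem GeodConvex.exists_adj_not_adj (hK : GeodConvex G K) (hG : Ptolemaic G) (hy : y ∉ K)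
    (ha : a ∈ K) (hya : G.Adj y a) (hk : k ∈ K) (hyp : G.Adj y p) (hpK : p ∉ K)
    (hp : G.dist p k < G.dist y k) : ∃ r ∈ K, G.Adj p r ∧ ¬ G.Adj y r := by
  have hy_le := dist_le_dist_add_one hyp k
  have hyk : G.Reachable y k := .of_dist_ne_zero (by omega)
  have hpk : G.dist p k ≠ 0 := by
    rw [dist_ne_zero_iff_ne_and_reachable]
    exact ⟨fun h => hpK (h ▸ hk), hyp.symm.reachable.trans hyk⟩
  obtain ⟨r, hpr, hr⟩ := exists_adj_dist_add_one hpk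
  refine ⟨r, ?_, hpr, fun hyr => ?_⟩
  · by_cases hrk : G.dist r k = 0
    · have hrk' : r = k := (hpr.symm.reachable.trans
        (hyp.symm.reachable.trans hyk)).dist_eq_zero_iff.1 hrk
      exact hrk' ▸ hk
    · obtain ⟨b, hb, hyb, hblt⟩ := hK.exists_adj_dist_lt hG.1 hy ha hya hk (by omega)
      have hb_le := dist_le_dist_add_one hyb k
      have hpb : G.Adj p b :=
        hG.1.adj_of_dist_lt hyp hyb (fun h => hpK (h ▸ hb)) hp hblt
      have hbr : G.Adj b r := hG.adj_of_dist_eq hpb (by omega) hpr (by omega) hrk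
      exact hK.mem_of_adj hb hk hbr (by omega)
  · have := dist_le_dist_add_one hyr k
    omega

theorem GeodConvex.neighborSet_inter_ssubset (hK : GeodConvex G K) (hG : Ptolemaic G) (hy : y ∉ K)
    (hp : p ∉ K) (hyp : G.Adj y p) (hr : r ∈ K) (hpr : G.Adj p r) (hyr : ¬ G.Adj y r) :
    G.neighborSet y ∩ K ⊂ G.neighborSet p ∩ K := by
  have hyr2 : G.dist y r = 2 := dist_eq_two_of_adj_adj hyp hpr (fun h => hy (h ▸ hr)) hyr
  have hpr1 : G.dist p r = 1 := dist_eq_one_iff_adj.2 hpr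
  refine Set.ssubset_iff_of_subset ?_ |>.2 ⟨r, ⟨hpr, hr⟩, fun h => hyr h.1⟩
  rintro a ⟨hya, ha⟩
  refine ⟨?_, ha⟩
  by_contra hpa
  have har : ¬ G.Adj a r := fun har => by
    have har1 : G.dist a r = 1 := dist_eq_one_iff_adj.2 har
    exact hpa (hG.1.adj_of_dist_lt (k := r) hyp hya (fun h => hp (h ▸ ha)) (by omega) (by omega))
  have har3 : G.dist a r = 3 :=
    hG.dist_eq_three_of_inducedP4 ⟨hya.symm, hyp, hpr, mt .symm hpa, har, hyr⟩
  exact hy (hK.mem_of_adj ha hr hya.symm (by omega))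

theorem GeodConvex.insert (hK : GeodConvex G K)
    (hy : ∀ k ∈ K, ∀ p, G.Adj y p → G.dist p k < G.dist y k → p ∈ K) :
    GeodConvex G (insert y K) := by
  rw [geodConvex_iff_forall_adj]
  rintro a (rfl | ha) k (rfl | hk) c hac hlt
  · simp at hlt
  · exact Set.mem_insert_of_mem _ (hy k hk c hac hlt)
  · by_cases hck : c = k
    · exact hck ▸ Set.mem_insert c K
    have hkc : G.Reachable k c :=
      (Reachable.of_dist_ne_zero (by omega : G.dist a k ≠ 0)).symm.trans hac.reachable
    obtain ⟨p, hkp, hp⟩ := exists_adj_dist_add_one (hkc.pos_dist_of_ne (Ne.symm hck)).ne'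
    have hap := dist_le_dist_add_one hac p
    have hka := dist_le_dist_add_one hkp a
    rw [G.dist_comm (u := c) (v := k), G.dist_comm (u := a) (v := k)] at hlt
    rw [G.dist_comm (u := a) (v := p), G.dist_comm (u := c) (v := p)] at hap
    have hpK : p ∈ K := hy a ha p hkp (by omega)
    have hcp : G.dist c p < G.dist a p := by
      rw [G.dist_comm (u := c), G.dist_comm (u := a)]
      omega
    exact Set.mem_insert_of_mem _ (hK.mem_of_adj ha hpK hac hcp)
  · exact Set.mem_insert_of_mem _ (hK.mem_of_adj ha hk hac hlt)

theorem GeodConvex.exists_adj_of_reachable (hS : GeodConvex G S) (hKS : K ⊆ S) (hy : y ∈ S \ K)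
    (hk : k ∈ K) (hreach : G.Reachable k y) : ∃ z ∈ S \ K, ∃ a ∈ K, G.Adj z a := by
  obtain ⟨w, hpath, hlen⟩ := hreach.exists_path_of_dist
  obtain ⟨d, hd, hdK, hdK'⟩ := w.exists_boundary_dart K hk hy.2
  exact ⟨d.snd, ⟨hS (hKS hk) hy.1 w ⟨hpath, hlen⟩ _ (w.dart_snd_mem_support_of_mem_darts hd), hdK'⟩,
    d.fst, hdK, d.adj.symm⟩

theorem Ptolemaic.exists_geodConvex_insert (hG : Ptolemaic G) (hK : GeodConvex G K)
    (hS : GeodConvex G S) (hKS : K ⊂ S) (hfin : (S \ K).Finite) :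
    ∃ y ∈ S \ K, GeodConvex G (insert y K) := by
  obtain ⟨y, hy, hmax⟩ := hfin.exists_maximalFor (fun y => G.neighborSet y ∩ K) _
    (Set.nonempty_of_ssubset hKS)
  refine ⟨y, hy, hK.insert fun k hk p hyp hp => ?_⟩
  by_contra hpK
  have hpS : p ∈ S := hS.mem_of_adj hy.1 (hKS.subset hk) hyp hp
  have hyk : G.Reachable y k := .of_dist_ne_zero (by omega)
  obtain ⟨z, hz, b, hb, hzb⟩ := hS.exists_adj_of_reachable hKS.subset hy hk hyk.symm
  obtain ⟨a, hya, ha⟩ : (G.neighborSet y ∩ K).Nonempty := by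
    by_contra! hempty
    have hsub : G.neighborSet y ∩ K ⊆ G.neighborSet z ∩ K :=
      hempty.subset.trans (Set.empty_subset _)
    exact hempty.subset (hmax hz hsub ⟨hzb, hb⟩)
  obtain ⟨r, hr, hpr, hyr⟩ := hK.exists_adj_not_adj hG hy.2 ha hya hk hyp hpK hp
  have hss := hK.neighborSet_inter_ssubset hG hy.2 hpK hyp hr hpr hyr
  exact hss.not_subset (hmax ⟨hpS, hpK⟩ hss.subset)

theorem Ptolemaic.isConvexGeometry [Finite V] (hG : Ptolemaic G) :
    IsConvexGeometry (GeodConvex G) :=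
  isConvexGeometry_of_exists_insert (fun _ h => pConvex_sInter h) fun _ _ hK hS hKS =>
    hG.exists_geodConvex_insert hK hS hKS (Set.toFinite _)

end Sufficiency

theorem geodetic_convex_geometry_iff_ptolemaic_general [Finite V] (G : SimpleGraph V) :
    IsConvexGeometry (GeodConvex G) ↔ Ptolemaic G :=
  ⟨ptolemaic_of_isConvexGeometry, Ptolemaic.isConvexGeometry⟩

/-- A finite connected simple graph `G` is a convex geometry with respect to
the geodetic convexity if and only if `G` is Ptolemaic (chordal and gem-free). -/
theorem geodetic_convex_geometry_iff_ptolemaic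
    {V : Type*} [Fintype V] (G : SimpleGraph V) (hconn : G.Connected) :
    IsConvexGeometry (PConvex G (fun u v w => w.IsPath ∧ w.length = G.dist u v)) ↔
      (Chordal G ∧ ¬ HasInducedSubgraphIso G gemGraph) :=
  geodetic_convex_geometry_iff_ptolemaic_general G
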